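/- Let A_n = [a_n, b_n] be a sequence of compact intervals in ℝ with b_n − a_n → ∞, and assume there exists a constant d > 0 such that |a_n| < d·(b_n − a_n) for all n. Then the counting autocorrelation of ℙ with respect to (A_n) exists and equals δ_0: writing F_n = ℙ ∩ A_n, for every continuous compactly supported f : ℝ → ℂ one has (1/card F_n)·Σ_{x,y∈F_n} f(x−y) → f(0) as n → ∞ (the expression being interpreted as 0 when F_n = ∅). -/

import Mathlib

open Filter Topology Set

/-- The set of prime numbers together with their negatives, as a subset of `ℝ`. -/
def PrimesR : Set ℝ := {x | ∃ p : ℕ, p.Prime ∧ (x = (p : ℝ) ∨ x = -(p : ℝ))}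

/-- The (counting-normalised) autocorrelation sum of the finite sample `F` applied to a
test function `f`; interpreted as `0` when `F = ∅` (since then `(F.ncard : ℂ)⁻¹ = 0`). -/
noncomputable def autoCorr (F : Set ℝ) (f : ℝ → ℂ) : ℂ :=
  ((F.ncard : ℂ))⁻¹ * ∑ᶠ x ∈ F, ∑ᶠ y ∈ F, f (x - y)


lemma inv_quad_shift {u v y : ℝ} (h : |u - v| ≤ 1) :
    1 / (1 + (u - y) ^ 2) ≤ 3 / (1 + (v - y) ^ 2) := by
  rw [div_le_div_iff₀ (by positivity) (by positivity)]
  have := abs_le.mp h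
  have h2 : (u - v) ^ 2 ≤ 1 := by nlinarith
  nlinarith [sq_nonneg (2 * (u - y) + (u-v)), sq_nonneg (2*(u - y) - (u-v)), sq_nonneg ((u - y) + (u-v))]

lemma summable_int_quad : Summable (fun k : ℤ => 1 / (1 + (k : ℝ) ^ 2)) := by
  have h1 : Summable (fun k : ℤ => 1 / ((k : ℝ) ^ 2)) :=
    Real.summable_one_div_int_pow.mpr (by norm_num)
  have h3 : Summable (fun k : ℤ => if k = 0 then (1:ℝ) else 0) :=
    (hasSum_ite_eq 0 (1:ℝ)).summable
  refine Summable.of_nonneg_of_le (fun k => by positivity) (fun k => ?_) (h1.add h3)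
  by_cases hk : k = 0
  · simp [hk]
  · simp only [hk, if_false, add_zero]
    have : (0:ℝ) < (k:ℝ)^2 := by positivity
    gcongr
    linarith

lemma sum_quad_bound : ∃ B : ℝ, 0 ≤ B ∧ ∀ (y : ℝ) (s : Finset ℕ),
    ∑ j ∈ s, 1 / (1 + ((j : ℝ) - y) ^ 2) ≤ B := by
  refine ⟨3 * ∑' k : ℤ, 1 / (1 + (k : ℝ) ^ 2), by positivity, fun y s => ?_⟩
  have h1 : ∀ j ∈ s, 1 / (1 + ((j : ℝ) - y) ^ 2) ≤ 3 * (1 / (1 + (((j : ℤ) - ⌊y⌋ : ℤ) : ℝ) ^ 2)) := by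
    intro j _
    have h := inv_quad_shift (u := (j:ℝ) - y) (v := (j:ℝ) - ⌊y⌋) (y := 0) (by
      rw [abs_le]; constructor <;> linarith [Int.floor_le y, Int.lt_floor_add_one y])
    simp only [sub_zero] at h
    push_cast
    rw [mul_one_div]
    exact h
  refine (Finset.sum_le_sum h1).trans ?_
  rw [← Finset.mul_sum]
  gcongr
  have hinj : Set.InjOn (fun j : ℕ => ((j : ℤ) - ⌊y⌋ : ℤ)) s := by
    intro a _ b _ h
    simp at h
    exact h
  rw [← Finset.sum_image (f := fun k : ℤ => 1 / (1 + (k : ℝ) ^ 2)) hinj]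
  exact summable_int_quad.sum_le_tsum _ (fun k _ => by positivity)

lemma shell_bound (w : ℕ → ℝ) (hw : ∀ n, 0 ≤ w n) (C : ℝ) (hC : 0 ≤ C)
    (hwC : ∀ N : ℕ, ∑ n ∈ Finset.Icc 1 N, w n ≤ C * N) :
    ∃ B : ℝ, 0 ≤ B ∧ ∀ (y : ℝ) (s : Finset ℕ),
      ∑ n ∈ s, w n / n * (1 / (1 + (Real.log n - y) ^ 2)) ≤ B := by
  obtain ⟨B, hB, h⟩ := sum_quad_bound
  refine ⟨C * Real.exp 1 * 3 * B, by positivity, fun y s => ?_⟩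
  have hmap : ∀ n ∈ s, ⌊Real.log n⌋₊ ∈ s.image (fun n : ℕ => ⌊Real.log n⌋₊) :=
    fun n hn => Finset.mem_image_of_mem (fun n : ℕ => ⌊Real.log n⌋₊) hn
  rw [← Finset.sum_fiberwise_of_maps_to hmap]
  have hj : ∀ j ∈ s.image (fun n : ℕ => ⌊Real.log n⌋₊),
      ∑ n ∈ s.filter (fun n : ℕ => ⌊Real.log n⌋₊ = j), w n / n * (1 / (1 + (Real.log n - y) ^ 2)) ≤
        C * Real.exp 1 * 3 * (1 / (1 + ((j : ℝ) - y) ^ 2)) := by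
    intro j _
    have h1 : ∀ n ∈ s.filter (fun n : ℕ => ⌊Real.log n⌋₊ = j),
        w n / n * (1 / (1 + (Real.log n - y) ^ 2)) ≤
        (if n = 0 then 0 else w n) * (Real.exp (-j) * (3 / (1 + ((j : ℝ) - y) ^ 2))) := by
      intro n hn
      have hn2 := (Finset.mem_filter.mp hn).2
      rcases Nat.eq_zero_or_pos n with rfl | hpos
      · simp
      have hn1 : (1:ℝ) ≤ n := by exact_mod_cast hpos
      have hl : 0 ≤ Real.log n := Real.log_nonneg hn1
      have hf1 := Nat.floor_le hl
      have hf2 := Nat.lt_floor_add_one (Real.log n)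
      rw [hn2] at hf1 hf2
      rw [if_neg hpos.ne', div_mul_eq_mul_div, mul_div_assoc]
      refine mul_le_mul_of_nonneg_left ?_ (hw n)
      rw [div_eq_mul_inv, mul_comm]
      have h5 : (n:ℝ)⁻¹ ≤ Real.exp (-j) := by
        rw [Real.exp_neg]
        apply inv_anti₀ (Real.exp_pos _)
        rw [← Real.le_log_iff_exp_le (by linarith)]
        exact hf1
      have h6 := inv_quad_shift (u := Real.log n) (v := j) (y := y) (by rw [abs_le]; constructor <;> linarith)
      exact mul_le_mul h5 h6 (by positivity) (by positivity)
    refine (Finset.sum_le_sum h1).trans ?_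
    rw [← Finset.sum_mul]
    have h2 : ∑ n ∈ s.filter (fun n : ℕ => ⌊Real.log n⌋₊ = j), (if n = 0 then 0 else w n) ≤ C * Real.exp (j + 1) := by
      calc ∑ n ∈ s.filter (fun n : ℕ => ⌊Real.log n⌋₊ = j), (if n = 0 then 0 else w n)
          = ∑ n ∈ (s.filter (fun n : ℕ => ⌊Real.log n⌋₊ = j)).filter (fun n => n ≠ 0), w n := by
            symm
            rw [Finset.sum_filter]
            refine Finset.sum_congr rfl fun n _ => ?_
            by_cases hn : n = 0 <;> simp [hn]
        _ ≤ ∑ n ∈ Finset.Icc 1 ⌊Real.exp (j + 1)⌋₊, w n := by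
            refine Finset.sum_le_sum_of_subset_of_nonneg ?_ (fun n _ _ => hw n)
            intro n hn
            simp only [Finset.mem_filter] at hn
            obtain ⟨⟨_, h3⟩, h4⟩ := hn
            have hpos : 0 < n := Nat.pos_of_ne_zero h4
            rw [Finset.mem_Icc]
            refine ⟨hpos, ?_⟩
            rw [Nat.le_floor_iff (Real.exp_pos _).le]
            rw [← Real.log_le_iff_le_exp (by exact_mod_cast hpos)]
            have hf2 := Nat.lt_floor_add_one (Real.log n)
            rw [h3] at hf2
            exact hf2.le
        _ ≤ C * ⌊Real.exp (j + 1)⌋₊ := hwC _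
        _ ≤ C * Real.exp (j + 1) := by
            gcongr
            exact Nat.floor_le (Real.exp_pos _).le
    refine (mul_le_mul_of_nonneg_right h2 (by positivity)).trans (le_of_eq ?_)
    have : Real.exp ((j:ℝ) + 1) * Real.exp (-j) = Real.exp 1 := by
      rw [← Real.exp_add]; ring_nf
    calc _ = C * (Real.exp ((j:ℝ) + 1) * Real.exp (-j)) * (3 / (1 + ((j : ℝ) - y) ^ 2)) := by ring
      _ = _ := by rw [this]; ring
  refine (Finset.sum_le_sum hj).trans ?_
  rw [← Finset.mul_sum]
  exact mul_le_mul_of_nonneg_left (h y _) (by positivity)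

/-- Fejer kernel -/
noncomputable def fejK (u : ℝ) : ℝ := 2 * ∫ t in (0:ℝ)..1, (1 - t) * Real.cos (t * u)

lemma fejK_eq {u : ℝ} (hu : u ≠ 0) : fejK u = 2 * (1 - Real.cos u) / u ^ 2 := by
  have hd : ∀ t ∈ Set.uIcc (0:ℝ) 1, HasDerivAt
      (fun t => (1 - t) * Real.sin (t * u) / u - Real.cos (t * u) / u ^ 2)
      ((1 - t) * Real.cos (t * u)) t := by
    intro t _
    have h0 : HasDerivAt (fun t : ℝ => t * u) u t := by simpa using (hasDerivAt_id t).mul_const u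
    have h1 := h0.sin
    have h2 := h0.cos
    have h3 : HasDerivAt (fun t : ℝ => 1 - t) (-1) t := by simpa using (hasDerivAt_id t).const_sub 1
    have := ((h3.mul h1).div_const u).sub (h2.div_const (u^2))
    refine this.congr_deriv ?_
    field_simp
    ring
  unfold fejK
  rw [intervalIntegral.integral_eq_sub_of_hasDerivAt hd (by
    apply Continuous.intervalIntegrable; fun_prop)]
  simp
  field_simp
  ring

lemma fejK_zero : fejK 0 = 1 := by
  have : ∫ t in (0:ℝ)..1, (1 - t) = 1 / 2 := by
    rw [intervalIntegral.integral_sub (by simp) (by simp)]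
    simp
    norm_num
  simp [fejK, this]

lemma fejK_nonneg (u : ℝ) : 0 ≤ fejK u := by
  by_cases hu : u = 0
  · rw [hu, fejK_zero]; norm_num
  rw [fejK_eq hu]
  have := Real.cos_le_one u
  apply div_nonneg <;> nlinarith [sq_nonneg u]

lemma fejK_le_one (u : ℝ) : fejK u ≤ 1 := by
  by_cases hu : u = 0
  · rw [hu, fejK_zero]
  rw [fejK_eq hu]
  have := Real.one_sub_sq_div_two_le_cos (x := u)
  rw [div_le_one (by positivity)]
  linarith

lemma fejK_le (u : ℝ) (hu : u ≠ 0) : fejK u ≤ 4 / u ^ 2 := by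
  rw [fejK_eq hu]
  have := Real.neg_one_le_cos u
  gcongr
  linarith

lemma fejK_ge (u : ℝ) (hu : |u| ≤ 1) : 1 / 2 ≤ fejK u := by
  by_cases hu0 : u = 0
  · rw [hu0, fejK_zero]; norm_num
  rw [fejK_eq hu0]
  have h1 := Real.cos_bound hu
  have h2 := (abs_le.mp h1).2
  have h3 : |u| ^ 4 ≤ u ^ 2 := by
    rw [← sq_abs u]
    have := abs_nonneg u
    exact pow_le_pow_of_le_one this hu (by norm_num)
  rw [le_div_iff₀ (by positivity)]
  nlinarith [sq_nonneg u]

lemma fejK_le_quad (u : ℝ) : fejK u ≤ 5 * (1 / (1 + u ^ 2)) := by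
  rw [mul_one_div, le_div_iff₀ (by positivity)]
  by_cases hu : u = 0
  · subst hu; rw [fejK_zero]; norm_num
  have h1 := fejK_le u hu
  rw [le_div_iff₀ (by positivity)] at h1
  nlinarith [fejK_le_one u]

lemma fejK_scale {T : ℝ} (hT : 0 < T) : ∃ D : ℝ, 0 < D ∧ ∀ u, fejK (T * u) ≤ D * (1 / (1 + u ^ 2)) := by
  refine ⟨5 * (1 + 1 / T ^ 2), by positivity, fun u => (fejK_le_quad _).trans ?_⟩
  rw [mul_assoc]
  gcongr
  rw [mul_one_div, div_le_div_iff₀ (by positivity) (by positivity)]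
  have : (1 + 1 / T ^ 2) * (1 + (T * u) ^ 2) = 1 + 1 / T^2 + T^2*u^2 + u^2 := by
    field_simp
    ring
  rw [this]
  have : 0 ≤ 1 / T^2 + T^2*u^2 := by positivity
  linarith

lemma fejK_continuous : Continuous fejK := by
  unfold fejK
  refine continuous_const.mul ?_
  apply intervalIntegral.continuous_parametric_intervalIntegral_of_continuous'
  fun_prop

lemma fejK_complex (u : ℝ) :
    fejK u = (2 * ∫ t in (0:ℝ)..1, ((1 - t : ℝ) : ℂ) * Complex.exp (Complex.I * (t * u : ℝ))).re := by
  have h1 : IntervalIntegrable (fun t : ℝ => ((1 - t : ℝ) : ℂ) * Complex.exp (Complex.I * (t * u : ℝ))) MeasureTheory.volume 0 1 := by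
    apply Continuous.intervalIntegrable; fun_prop
  have h2 := Complex.reCLM.intervalIntegral_comp_comm h1
  have h3 : ∀ z : ℂ, (2 * z).re = 2 * Complex.reCLM z := by intro z; simp
  rw [h3, ← h2]
  unfold fejK
  congr 1
  apply intervalIntegral.integral_congr
  intro t _
  simp only [Complex.reCLM_apply]
  rw [Complex.re_ofReal_mul, mul_comm Complex.I, Complex.exp_ofReal_mul_I_re]


lemma term_shift (c : ℕ → ℝ) (σ t T y : ℝ) (n : ℕ) :
    ((1 - t : ℝ) : ℂ) * Complex.exp (-(Complex.I * (t * T * y : ℝ))) *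
      LSeries.term (fun n => (c n : ℂ)) (σ - Complex.I * (t * T : ℝ)) n =
    ((c n / (n:ℝ) ^ σ * (if n = 0 then 0 else 1) : ℝ) : ℂ) *
      (((1 - t : ℝ) : ℂ) * Complex.exp (Complex.I * (t * (T * (Real.log n - y)) : ℝ))) := by
  by_cases hn : n = 0
  · simp [hn]
  have hnp : (0:ℝ) < n := by exact_mod_cast Nat.pos_of_ne_zero hn
  have hnc : (n:ℂ) ≠ 0 := by exact_mod_cast hn
  rw [LSeries.term_of_ne_zero hn, if_neg hn, mul_one, Complex.cpow_sub _ _ hnc]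
  rw [Complex.ofReal_div, Complex.ofReal_cpow hnp.le]
  have h1 : (n:ℂ) ^ (Complex.I * (t * T : ℝ)) = Complex.exp (Complex.I * (t * T * Real.log n : ℝ)) := by
    rw [Complex.cpow_def_of_ne_zero hnc, ← Complex.ofReal_natCast, ← Complex.ofReal_log hnp.le]
    congr 1
    push_cast
    ring
  rw [h1]
  have h2 : Complex.exp (Complex.I * (t * (T * (Real.log n - y)) : ℝ)) =
      Complex.exp (-(Complex.I * (t * T * y : ℝ))) * Complex.exp (Complex.I * (t * T * Real.log n : ℝ)) := by
    rw [← Complex.exp_add]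
    congr 1
    push_cast
    ring
  rw [h2]
  push_cast
  have : (n:ℂ) ^ (σ:ℂ) ≠ 0 := by simp [Complex.cpow_eq_zero_iff, hnc]
  have h3 := Complex.exp_ne_zero (Complex.I * (t * T * Real.log n))
  field_simp

lemma hasSum_sigma (c : ℕ → ℝ) (hs : ∀ s : ℂ, 1 < s.re → LSeriesSummable (fun n => (c n : ℂ)) s)
    (G : ℂ → ℂ) (hGc : ContinuousOn G {s | 1 ≤ s.re})
    (hG : ∀ s : ℂ, 1 < s.re → G s = LSeries (fun n => (c n : ℂ)) s) (T y σ : ℝ) (hσ : 1 < σ) :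
    HasSum (fun n : ℕ => c n / (n:ℝ) ^ σ * (if n = 0 then 0 else 1) * fejK (T * (Real.log n - y)))
      (2 * ∫ t in (0:ℝ)..1, ((1 - t : ℝ) : ℂ) * Complex.exp (-(Complex.I * (t * T * y : ℝ))) *
        G (σ - Complex.I * (t * T : ℝ))).re := by
  have hre : ∀ t : ℝ, 1 < ((σ : ℂ) - Complex.I * (t * T : ℝ)).re := by
    intro t; simpa using hσ
  have key : HasSum (fun n : ℕ => ∫ t in (0:ℝ)..1,
      ((1 - t : ℝ) : ℂ) * Complex.exp (-(Complex.I * (t * T * y : ℝ))) *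
      LSeries.term (fun n => (c n : ℂ)) (σ - Complex.I * (t * T : ℝ)) n)
      (∫ t in (0:ℝ)..1, ((1 - t : ℝ) : ℂ) * Complex.exp (-(Complex.I * (t * T * y : ℝ))) *
        G (σ - Complex.I * (t * T : ℝ))) := by
    refine intervalIntegral.hasSum_integral_of_dominated_convergence
      (fun n _ => ‖LSeries.term (fun n => (c n : ℂ)) σ n‖) ?_ ?_ ?_ ?_ ?_
    · intro n
      apply Continuous.aestronglyMeasurable
      simp_rw [term_shift]
      fun_prop
    · intro n
      refine Eventually.of_forall fun t ht => ?_
      rw [Set.uIoc_of_le zero_le_one] at ht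
      have h1 : ‖Complex.exp (-(Complex.I * (t * T * y : ℝ)))‖ = 1 := by
        rw [Complex.norm_exp]; simp
      have h2 : ‖((1 - t : ℝ) : ℂ)‖ ≤ 1 := by
        rw [Complex.norm_real, Real.norm_eq_abs, abs_le]; constructor <;> linarith [ht.1, ht.2]
      have h3 : ‖LSeries.term (fun n => (c n : ℂ)) (σ - Complex.I * (t * T : ℝ)) n‖ = 
        ‖LSeries.term (fun n => (c n : ℂ)) σ n‖ := by
        rw [LSeries.norm_term_eq, LSeries.norm_term_eq]; simp
      rw [norm_mul, norm_mul, h1, h3, mul_one]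
      exact mul_le_of_le_one_left (norm_nonneg _) h2
    · refine Eventually.of_forall fun t ht => ?_
      exact (hs σ (by simpa using hσ)).norm
    · simp
    · refine Eventually.of_forall fun t ht => ?_
      rw [hG _ (hre t)]
      exact (hs _ (hre t)).hasSum.mul_left _
  have key2 := Complex.hasSum_re (key.mul_left 2)
  refine key2.congr_fun ?_ |> fun h => h
  intro n
  simp_rw [term_shift]
  rw [intervalIntegral.integral_const_mul, fejK_complex, ← Complex.re_ofReal_mul]
  congr 1
  ring

lemma tauber (c : ℕ → ℝ) (C : ℝ) (hC : 0 ≤ C)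
    (hcC : ∀ N : ℕ, ∑ n ∈ Finset.Icc 1 N, |c n| ≤ C * N)
    (hs : ∀ s : ℂ, 1 < s.re → LSeriesSummable (fun n => (c n : ℂ)) s)
    (G : ℂ → ℂ) (hGc : ContinuousOn G {s | 1 ≤ s.re})
    (hG : ∀ s : ℂ, 1 < s.re → G s = LSeries (fun n => (c n : ℂ)) s) (T : ℝ) (hT : 0 < T) :
    Tendsto (fun y : ℝ => ∑' n : ℕ, c n / n * fejK (T * (Real.log n - y))) atTop (𝓝 0) := by
  obtain ⟨D, hD, hfD⟩ := fejK_scale hT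
  obtain ⟨B, hB, hsh⟩ := shell_bound (fun n => |c n|) (fun n => abs_nonneg _) C hC hcC
  have hmem : ∀ σ t : ℝ, 1 ≤ σ → ((σ : ℂ) - Complex.I * (t * T : ℝ)) ∈ {s : ℂ | 1 ≤ s.re} := by
    intro σ t h; simpa using h
  -- identity at σ = 1
  have hid : ∀ y : ℝ, ∑' n : ℕ, c n / n * fejK (T * (Real.log n - y)) =
      (2 * ∫ t in (0:ℝ)..1, ((1 - t : ℝ) : ℂ) * Complex.exp (-(Complex.I * (t * T * y : ℝ))) *
        G ((1:ℝ) - Complex.I * (t * T : ℝ))).re := by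
    intro y
    have hsum : Summable (fun n : ℕ => |c n| / n * (D * (1 / (1 + (Real.log n - y) ^ 2)))) := by
      have : Summable (fun n : ℕ => |c n| / n * (1 / (1 + (Real.log n - y) ^ 2))) :=
        summable_of_sum_le (fun n => by positivity) (hsh y)
      refine (this.mul_left D).congr fun n => by ring
    have hL : Tendsto (fun σ : ℝ => ∑' n : ℕ, c n / (n:ℝ) ^ σ * (if n = 0 then 0 else 1) *
        fejK (T * (Real.log n - y))) (𝓝[>] 1) (𝓝 (∑' n : ℕ, c n / n * fejK (T * (Real.log n - y)))) := by
      refine tendsto_tsum_of_dominated_convergence hsum ?_ ?_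
      · intro n
        refine Tendsto.mul_const _ ?_
        by_cases hn : n = 0
        · simp [hn]
        · simp only [hn, if_false, mul_one]
          have hnp : (0:ℝ) < n := by exact_mod_cast Nat.pos_of_ne_zero hn
          have : ContinuousAt (fun σ : ℝ => c n / (n:ℝ) ^ σ) 1 := by
            refine ContinuousAt.div continuousAt_const ?_ (by positivity)
            exact (Real.continuousAt_const_rpow hnp.ne')
          have h := this.tendsto
          rw [Real.rpow_one] at h
          exact h.mono_left nhdsWithin_le_nhds
      · filter_upwards [self_mem_nhdsWithin] with σ hσ n
        have hσ' : 1 < σ := hσ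
        rw [norm_mul, Real.norm_eq_abs, Real.norm_eq_abs, abs_of_nonneg (fejK_nonneg _)]
        refine mul_le_mul ?_ (hfD _) (fejK_nonneg _) (by positivity)
        by_cases hn : n = 0
        · simp [hn]
        · simp only [hn, if_false, mul_one]
          have hnp : (1:ℝ) ≤ n := by exact_mod_cast Nat.pos_of_ne_zero hn
          rw [abs_div, abs_of_nonneg (by positivity : (0:ℝ) ≤ (n:ℝ) ^ σ)]
          gcongr
          calc (n:ℝ) = (n:ℝ) ^ (1:ℝ) := (Real.rpow_one _).symm
            _ ≤ _ := Real.rpow_le_rpow_of_exponent_le hnp hσ'.le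
    -- compactness bound
    have hcont : Continuous (fun p : ℝ × ℝ => ((p.1 : ℂ) - Complex.I * (p.2 * T : ℝ))) := by fun_prop
    have hcomp : IsCompact ((fun p : ℝ × ℝ => ((p.1 : ℂ) - Complex.I * (p.2 * T : ℝ))) '' (Set.Icc 1 2 ×ˢ Set.Icc 0 1)) :=
      (isCompact_Icc.prod isCompact_Icc).image hcont
    obtain ⟨M, hM⟩ := hcomp.exists_bound_of_continuousOn (f := G) (hGc.mono (by
      rintro _ ⟨⟨σ, t⟩, ⟨h1, h2⟩, rfl⟩
      exact hmem σ t h1.1))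
    have hR : Tendsto (fun σ : ℝ => (2 * ∫ t in (0:ℝ)..1, ((1 - t : ℝ) : ℂ) *
          Complex.exp (-(Complex.I * (t * T * y : ℝ))) * G (σ - Complex.I * (t * T : ℝ))).re) (𝓝[>] 1)
        (𝓝 (2 * ∫ t in (0:ℝ)..1, ((1 - t : ℝ) : ℂ) * Complex.exp (-(Complex.I * (t * T * y : ℝ))) *
        G ((1:ℝ) - Complex.I * (t * T : ℝ))).re) := by
      refine (Complex.continuous_re.tendsto _).comp (Tendsto.const_mul _ ?_)
      refine intervalIntegral.tendsto_integral_filter_of_dominated_convergence (fun _ => M) ?_ ?_ ?_ ?_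
      · filter_upwards [self_mem_nhdsWithin] with σ hσ
        have hσ' : 1 < σ := hσ
        apply Continuous.aestronglyMeasurable
        refine Continuous.mul (by fun_prop) ?_
        exact hGc.comp_continuous (by fun_prop) (fun t => hmem σ t hσ'.le)
      · have : Set.Ioo (0:ℝ) 2 ∈ 𝓝[>] (1:ℝ) := mem_nhdsWithin_of_mem_nhds (Ioo_mem_nhds (by norm_num) (by norm_num))
        filter_upwards [self_mem_nhdsWithin, this] with σ hσ hσ2
        have hσ' : 1 < σ := hσ
        refine Eventually.of_forall fun t ht => ?_
        rw [Set.uIoc_of_le zero_le_one] at ht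
        have h1 : ‖Complex.exp (-(Complex.I * (t * T * y : ℝ)))‖ = 1 := by
          rw [Complex.norm_exp]; simp
        have h2 : ‖((1 - t : ℝ) : ℂ)‖ ≤ 1 := by
          rw [Complex.norm_real, Real.norm_eq_abs, abs_le]; constructor <;> linarith [ht.1, ht.2]
        rw [norm_mul, norm_mul, h1, mul_one]
        refine (mul_le_of_le_one_left (norm_nonneg _) h2).trans (hM _ ?_)
        exact ⟨(σ, t), ⟨⟨hσ'.le, hσ2.2.le⟩, ⟨ht.1.le, ht.2⟩⟩, rfl⟩
      · simp
      · refine Eventually.of_forall fun t ht => ?_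
        refine Tendsto.const_mul _ ?_
        have h1 := hGc _ (hmem 1 t le_rfl)
        refine Tendsto.comp h1 ?_
        refine tendsto_nhdsWithin_iff.mpr ⟨?_, ?_⟩
        · have : Continuous (fun σ : ℝ => (σ : ℂ) - Complex.I * (t * T : ℝ)) := by fun_prop
          exact (this.tendsto 1).mono_left nhdsWithin_le_nhds
        · filter_upwards [self_mem_nhdsWithin] with σ hσ
          exact hmem σ t (le_of_lt hσ)
    have hE : (fun σ : ℝ => ∑' n : ℕ, c n / (n:ℝ) ^ σ * (if n = 0 then 0 else 1) *
        fejK (T * (Real.log n - y))) =ᶠ[𝓝[>] 1] (fun σ : ℝ => (2 * ∫ t in (0:ℝ)..1, ((1 - t : ℝ) : ℂ) *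
          Complex.exp (-(Complex.I * (t * T * y : ℝ))) * G (σ - Complex.I * (t * T : ℝ))).re) := by
      filter_upwards [self_mem_nhdsWithin] with σ hσ
      exact (hasSum_sigma c hs G hGc hG T y σ hσ).tsum_eq
    exact tendsto_nhds_unique (hL.congr' hE) hR
  simp_rw [hid]
  have hRL := Real.tendsto_integral_exp_smul_cocompact (fun t : ℝ =>
    (Set.Ioc (0:ℝ) 1).indicator (fun t : ℝ => ((1 - t : ℝ) : ℂ) * G ((1:ℝ) - Complex.I * (t * T : ℝ))) t)
  have htop : Tendsto (fun y : ℝ => T * y / (2 * Real.pi)) atTop (cocompact ℝ) := by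
    refine Tendsto.mono_right ?_ atTop_le_cocompact
    refine Tendsto.atTop_div_const (by positivity) ?_
    exact tendsto_id.const_mul_atTop hT
  have h3 := hRL.comp htop
  have h4 := (Complex.continuous_re.tendsto _).comp (h3.const_mul 2)
  simp only [mul_zero, Complex.zero_re] at h4
  refine h4.congr fun y => ?_
  simp only [Function.comp]
  congr 2
  rw [intervalIntegral.integral_of_le zero_le_one, ← MeasureTheory.integral_indicator measurableSet_Ioc]
  congr 1
  ext t
  by_cases ht : t ∈ Set.Ioc (0:ℝ) 1
  · rw [Set.indicator_of_mem ht, Set.indicator_of_mem ht, Circle.smul_def, Real.fourierChar_apply, smul_eq_mul]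
    have : Complex.exp (((2 * Real.pi * (-(t * (T * y / (2 * Real.pi)))) : ℝ) : ℂ) * Complex.I) =
      Complex.exp (-(Complex.I * (t * T * y : ℝ))) := by
      congr 1
      have : 2 * Real.pi * (-(t * (T * y / (2 * Real.pi)))) = -(t * T * y) := by
        field_simp
      rw [this]
      push_cast
      ring
    rw [this]
    ring
  · rw [Set.indicator_of_notMem ht, Set.indicator_of_notMem ht, smul_zero]


open ArithmeticFunction in
lemma psi_Icc_bound (N : ℕ) : ∑ n ∈ Finset.Icc 1 N, vonMangoldt n ≤ (Real.log 4 + 4) * N := by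
  have h := Chebyshev.psi_le_const_mul_self (x := (N:ℝ)) (by positivity)
  rw [Chebyshev.psi, Nat.floor_natCast] at h
  exact h

lemma zeta_update_continuous : Continuous
    (Function.update (fun s : ℂ => riemannZeta s - 1 / (s - 1)) 1 Real.eulerMascheroniConstant) := by
  rw [continuous_iff_continuousAt]
  intro s
  by_cases hs : s = 1
  · subst hs
    rw [continuousAt_update_same]
    exact tendsto_riemannZeta_sub_one_div
  · rw [continuousAt_update_of_ne hs]
    refine (differentiableAt_riemannZeta hs).continuousAt.sub ?_
    refine continuousAt_const.div (by fun_prop) (sub_ne_zero.mpr hs)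

open ArithmeticFunction ArithmeticFunction.vonMangoldt in
lemma tauber_AP (q : ℕ) [NeZero q] (a : ZMod q) (ha : IsUnit a) (T : ℝ) (hT : 0 < T) :
    Tendsto (fun y : ℝ => ∑' n : ℕ, (residueClass a n - (q.totient : ℝ)⁻¹) / n *
      fejK (T * (Real.log n - y))) atTop (𝓝 0) := by
  have hsum1 : ∀ s : ℂ, 1 < s.re → LSeriesSummable (fun n => (residueClass a n : ℂ)) s := by
    intro s hs
    refine LSeriesSummable_of_abscissaOfAbsConv_lt_re ?_
    refine (abscissaOfAbsConv_residueClass_le_one a).trans_lt ?_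
    exact_mod_cast hs
  have hsum2 : ∀ s : ℂ, 1 < s.re → LSeriesSummable ((q.totient : ℂ)⁻¹ • (1 : ℕ → ℂ)) s :=
    fun s hs => (LSeriesSummable_one_iff.mpr hs).smul _
  have hfun : (fun n : ℕ => ((residueClass a n - (q.totient : ℝ)⁻¹ : ℝ) : ℂ)) =
      (fun n => (residueClass a n : ℂ)) - ((q.totient : ℂ)⁻¹ • (1 : ℕ → ℂ)) := by
    ext n; simp
  have htot : (q.totient : ℝ)⁻¹ ≤ 1 := by
    apply inv_le_one_of_one_le₀
    exact_mod_cast Nat.totient_pos.mpr (Nat.pos_of_neZero q)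
  refine tauber _ (Real.log 4 + 5) (by positivity) ?_ ?_
    (fun s => LFunctionResidueClassAux a s - (q.totient : ℂ)⁻¹ *
      (Function.update (fun s : ℂ => riemannZeta s - 1 / (s - 1)) 1 Real.eulerMascheroniConstant s)) ?_ ?_ T hT
  · intro N
    calc ∑ n ∈ Finset.Icc 1 N, |residueClass a n - (q.totient : ℝ)⁻¹|
        ≤ ∑ n ∈ Finset.Icc 1 N, (vonMangoldt n + 1) := by
          refine Finset.sum_le_sum fun n _ => ?_
          have h1 := residueClass_nonneg a n
          have h2 := residueClass_le a n
          have h3 : 0 ≤ (q.totient : ℝ)⁻¹ := by positivity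
          rw [abs_le]; constructor <;> linarith
      _ ≤ (Real.log 4 + 5) * N := by
          rw [Finset.sum_add_distrib]
          have := psi_Icc_bound N
          simp only [Finset.sum_const, Nat.card_Icc, nsmul_eq_mul, mul_one]
          simp
          linarith
  · intro s hs
    rw [hfun]
    exact (hsum1 s hs).sub (hsum2 s hs)
  · refine (continuousOn_LFunctionResidueClassAux a).sub ?_
    exact (continuous_const.mul zeta_update_continuous).continuousOn
  · intro s hs
    rw [hfun, LSeries_sub (hsum1 s hs) (hsum2 s hs), LSeries_smul, LSeries_one_eq_riemannZeta hs]
    have h1 : s ≠ 1 := by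
      rintro rfl; simp at hs
    have h2 := eqOn_LFunctionResidueClassAux ha hs
    rw [h2, Function.update_of_ne h1]
    simp only [smul_eq_mul]
    ring

lemma ker_summable (w : ℕ → ℝ) (hw : ∀ n, 0 ≤ w n) (C : ℝ) (hC : 0 ≤ C)
    (hwC : ∀ N : ℕ, ∑ n ∈ Finset.Icc 1 N, w n ≤ C * N) (T : ℝ) (hT : 0 < T) (y : ℝ) :
    Summable (fun n : ℕ => w n / n * fejK (T * (Real.log n - y))) := by
  obtain ⟨D, hD, hfD⟩ := fejK_scale hT
  obtain ⟨B, hB, hsh⟩ := shell_bound w hw C hC hwC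
  have : Summable (fun n : ℕ => w n / n * (1 / (1 + (Real.log n - y) ^ 2))) :=
        summable_of_sum_le (fun n => by have := hw n; positivity) (hsh y)
  refine Summable.of_nonneg_of_le (fun n => ?_) (fun n => ?_) (this.mul_left D)
  · have := hw n; have := fejK_nonneg (T * (Real.log n - y)); positivity
  · have := hw n
    calc w n / n * fejK (T * (Real.log n - y)) ≤ w n / n * (D * (1 / (1 + (Real.log n - y) ^ 2))) := by
          gcongr; exact hfD _
      _ = _ := by ring

lemma one_Icc_bound (N : ℕ) : ∑ n ∈ Finset.Icc 1 N, (1:ℝ) ≤ 1 * N := by simp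

open ArithmeticFunction ArithmeticFunction.vonMangoldt in
lemma residue_Icc_bound {q : ℕ} (a : ZMod q) (N : ℕ) :
    ∑ n ∈ Finset.Icc 1 N, residueClass a n ≤ (Real.log 4 + 4) * N :=
  (Finset.sum_le_sum fun n _ => residueClass_le a n).trans (psi_Icc_bound N)

open ArithmeticFunction ArithmeticFunction.vonMangoldt in
lemma tauber_AP' (q : ℕ) [NeZero q] (a : ZMod q) (ha : IsUnit a) (T : ℝ) (hT : 0 < T) :
    Tendsto (fun y : ℝ => ∑' n : ℕ, residueClass a n / n * fejK (T * (Real.log n - y))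
      - (q.totient : ℝ)⁻¹ * ∑' n : ℕ, 1 / (n:ℝ) * fejK (T * (Real.log n - y))) atTop (𝓝 0) := by
  refine (tauber_AP q a ha T hT).congr fun y => ?_
  have h1 := ker_summable (residueClass a) (residueClass_nonneg a) _ (by positivity)
    (residue_Icc_bound a) T hT y
  have h2 := ker_summable (fun _ => 1) (fun _ => zero_le_one) _ (by positivity)
    one_Icc_bound T hT y
  rw [← tsum_mul_left, ← h1.tsum_sub (h2.mul_left _)]
  refine tsum_congr fun n => ?_
  ring

open ArithmeticFunction ArithmeticFunction.vonMangoldt in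
lemma AP_upper : ∃ B : ℝ, 0 < B ∧ ∀ (q : ℕ) [NeZero q] (a : ZMod q), IsUnit a →
    ∀ᶠ y : ℝ in atTop, ∑' n : ℕ, residueClass a n / n * fejK (1 * (Real.log n - y)) ≤
      B * (q.totient : ℝ)⁻¹ := by
  obtain ⟨D, hD, hfD⟩ := fejK_scale one_pos
  obtain ⟨B, hB, hsh⟩ := shell_bound (fun _ => 1) (fun _ => zero_le_one) 1 zero_le_one one_Icc_bound
  refine ⟨D * B + 1, by positivity, fun q _ a ha => ?_⟩
  have htot : 0 < (q.totient : ℝ)⁻¹ := by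
    have := Nat.totient_pos.mpr (Nat.pos_of_neZero q)
    positivity
  have h := (tauber_AP' q a ha 1 one_pos).eventually (gt_mem_nhds htot)
  filter_upwards [h] with y hy
  have h3 : ∑' n : ℕ, 1 / (n:ℝ) * fejK (1 * (Real.log n - y)) ≤ D * B := by
    refine Real.tsum_le_of_sum_le (fun n => ?_) (fun s => ?_)
    · have := fejK_nonneg (1 * (Real.log n - y)); positivity
    · refine (Finset.sum_le_sum (fun n _ => ?_)).trans
        ((Finset.mul_sum s _ D).symm.le.trans (mul_le_mul_of_nonneg_left (hsh y s) hD.le))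
      calc 1 / (n:ℝ) * fejK (1 * (Real.log n - y)) ≤ 1 / n * (D * (1 / (1 + (Real.log n - y) ^ 2))) := by
            gcongr; exact hfD _
        _ = _ := by ring
  have h4 := mul_le_mul_of_nonneg_left h3 htot.le
  linarith

lemma S1_lower (T : ℝ) (hT : 1 ≤ T) : ∀ᶠ y : ℝ in atTop,
    1 / (8 * T) ≤ ∑' n : ℕ, 1 / (n:ℝ) * fejK (T * (Real.log n - y)) := by
  have hT0 : 0 < T := by linarith
  have hexp : Tendsto (fun y : ℝ => Real.exp (-y)) atTop (𝓝 0) := Real.tendsto_exp_neg_atTop_nhds_zero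
  have hev := hexp.eventually (gt_mem_nhds (show 0 < 1 / (4 * T) by positivity))
  filter_upwards [hev] with y hy
  have h2 := ker_summable (fun _ => 1) (fun _ => zero_le_one) _ (by positivity)
    one_Icc_bound T hT0 y
  have h3 := h2.sum_le_tsum (Finset.Icc ⌈Real.exp y⌉₊ ⌊Real.exp (y + 1 / T)⌋₊) (fun n _ => by
    have := fejK_nonneg (T * (Real.log n - y)); positivity)
  refine le_trans ?_ h3
  have h4 : ∀ n ∈ Finset.Icc ⌈Real.exp y⌉₊ ⌊Real.exp (y + 1 / T)⌋₊,
      Real.exp (-(y + 1 / T)) * (1 / 2) ≤ 1 / (n:ℝ) * fejK (T * (Real.log n - y)) := by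
    intro n hn
    rw [Finset.mem_Icc, Nat.ceil_le, Nat.le_floor_iff (Real.exp_pos _).le] at hn
    have hnp : (0:ℝ) < n := (Real.exp_pos y).trans_le hn.1
    have h5 : y ≤ Real.log n := (Real.le_log_iff_exp_le hnp).mpr hn.1
    have h6 : Real.log n ≤ y + 1 / T := (Real.log_le_iff_le_exp hnp).mpr hn.2
    have h7 : |T * (Real.log n - y)| ≤ 1 := by
      rw [abs_of_nonneg (mul_nonneg hT0.le (by linarith))]
      calc T * (Real.log n - y) ≤ T * (1 / T) := by gcongr; linarith
        _ = 1 := by field_simp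
    refine mul_le_mul ?_ (fejK_ge _ h7) (by norm_num) (by positivity)
    rw [Real.exp_neg, one_div (n:ℝ)]
    exact inv_anti₀ hnp hn.2
  refine le_trans ?_ (Finset.card_nsmul_le_sum _ _ _ h4)
  rw [nsmul_eq_mul, Nat.card_Icc]
  have h8 : Real.exp (y + 1 / T) - Real.exp y - 1 ≤
      ((⌊Real.exp (y + 1 / T)⌋₊ + 1 - ⌈Real.exp y⌉₊ : ℕ) : ℝ) := by
    have ha := Nat.lt_floor_add_one (Real.exp (y + 1 / T))
    have hb := Nat.ceil_lt_add_one (Real.exp_pos y).le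
    have hc : ((⌊Real.exp (y + 1 / T)⌋₊ + 1 : ℕ) : ℝ) - (⌈Real.exp y⌉₊ : ℝ) ≤
      ((⌊Real.exp (y + 1 / T)⌋₊ + 1 - ⌈Real.exp y⌉₊ : ℕ) : ℝ) := by
      rw [sub_le_iff_le_add]
      exact_mod_cast (by omega : ⌊Real.exp (y + 1 / T)⌋₊ + 1 ≤ (⌊Real.exp (y + 1 / T)⌋₊ + 1 - ⌈Real.exp y⌉₊) + ⌈Real.exp y⌉₊)
    push_cast at hc
    linarith
  refine le_trans ?_ (mul_le_mul_of_nonneg_right h8 (by positivity))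
  have h9 : (Real.exp (y + 1 / T) - Real.exp y - 1) * (Real.exp (-(y + 1 / T)) * (1 / 2)) =
      (1 - Real.exp (-(1 / T)) - Real.exp (-y) * Real.exp (-(1 / T))) / 2 := by
    have e1 : Real.exp (y + 1 / T) * Real.exp (-(y + 1 / T)) = 1 := by
      rw [← Real.exp_add]; simp
    have e2 : Real.exp y * Real.exp (-(y + 1 / T)) = Real.exp (-(1 / T)) := by
      rw [← Real.exp_add]; ring_nf
    have e3 : Real.exp (-(y + 1 / T)) = Real.exp (-y) * Real.exp (-(1 / T)) := by
      rw [← Real.exp_add]; ring_nf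
    rw [← e3]
    linear_combination (1/2) * e1 - (1/2) * e2
  rw [h9]
  have h10 : Real.exp (-(1 / T)) ≤ 1 - 1 / (2 * T) := by
    have e4 : 1 + 1 / T ≤ Real.exp (1 / T) := by linarith [Real.add_one_le_exp (1 / T)]
    rw [Real.exp_neg]
    refine (inv_anti₀ (by positivity) e4).trans ?_
    rw [inv_le_iff_one_le_mul₀ (by positivity)]
    have : (1 - 1 / (2 * T)) * (1 + 1 / T) = 1 + (T - 1) / (2 * T ^ 2) := by
      field_simp
      ring
    rw [this]
    have : 0 ≤ (T - 1) / (2 * T ^ 2) := div_nonneg (by linarith) (by positivity)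
    linarith
  have h11 : Real.exp (-(1 / T)) ≤ 1 := Real.exp_le_one_iff.mpr (by simp; positivity)
  have h12 : Real.exp (-y) * Real.exp (-(1 / T)) ≤ 1 / (4 * T) * 1 := by
    gcongr
  have e5 : 1 / (8 * T) = (1 / (2 * T) - 1 / (4 * T)) / 2 := by field_simp; norm_num
  rw [e5]
  linarith
  
open ArithmeticFunction ArithmeticFunction.vonMangoldt in
lemma short_lower (δ : ℝ) (hδ : 0 < δ) : ∃ c : ℝ, 0 < c ∧ ∀ᶠ y : ℝ in atTop,
    c ≤ ∑ n ∈ Finset.Icc ⌈Real.exp (y - δ)⌉₊ ⌊Real.exp (y + δ)⌋₊, vonMangoldt n / n := by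
  obtain ⟨B, hB, hsh⟩ := shell_bound (fun n => vonMangoldt n) (fun n => vonMangoldt_nonneg)
    _ (by positivity) psi_Icc_bound
  set E : ℝ := 4 * (1 + 1 / δ ^ 2) with hE
  have hEp : 0 < E := by positivity
  set T : ℝ := 32 * (E * B) + 1 with hTdef
  have hEB : 0 ≤ E * B := by positivity
  have hT : 1 ≤ T := by linarith
  have hT0 : 0 < T := by linarith
  refine ⟨1 / (32 * T), by positivity, ?_⟩
  have h1 := (tauber_AP' 1 1 isUnit_one T hT0).eventually
    (lt_mem_nhds (show -(1 / (16 * T)) < 0 by simp; positivity))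
  filter_upwards [h1, S1_lower T hT] with y hy1 hy2
  have hres : ∀ n, residueClass (1 : ZMod 1) n = vonMangoldt n := by
    intro n
    rw [residueClass, Set.indicator_of_mem]
    exact Subsingleton.elim _ _
  simp only [hres, Nat.totient_one, Nat.cast_one, inv_one, one_mul] at hy1
  have hS := ker_summable (fun n => vonMangoldt n) (fun n => vonMangoldt_nonneg)
    _ (by positivity) psi_Icc_bound T hT0 y
  set W := Finset.Icc ⌈Real.exp (y - δ)⌉₊ ⌊Real.exp (y + δ)⌋₊ with hW
  have hup : ∑' n : ℕ, vonMangoldt n / n * fejK (T * (Real.log n - y)) ≤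
      ∑ n ∈ W, vonMangoldt n / n + E / T ^ 2 * B := by
    refine Real.tsum_le_of_sum_le (fun n => ?_) (fun s => ?_)
    · have := fejK_nonneg (T * (Real.log n - y))
      have := vonMangoldt_nonneg (n := n)
      positivity
    · have hterm : ∀ n ∈ s, vonMangoldt n / n * fejK (T * (Real.log n - y)) ≤
          (if n ∈ W then vonMangoldt n / n else 0) +
            E / T ^ 2 * (vonMangoldt n / n * (1 / (1 + (Real.log n - y) ^ 2))) := by
        intro n _
        have hv : 0 ≤ vonMangoldt n / n := div_nonneg vonMangoldt_nonneg (by positivity)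
        by_cases hn : n ∈ W
        · rw [if_pos hn]
          have := mul_le_mul_of_nonneg_left (fejK_le_one (T * (Real.log n - y))) hv
          have h2 : 0 ≤ E / T ^ 2 * (vonMangoldt n / n * (1 / (1 + (Real.log n - y) ^ 2))) := by positivity
          linarith
        · rw [if_neg hn, zero_add]
          rcases Nat.eq_zero_or_pos n with rfl | hpos
          · simp
          have hnp : (0:ℝ) < n := by exact_mod_cast hpos
          have hfar : δ ^ 2 ≤ (Real.log n - y) ^ 2 := by
            rw [sq_le_sq, abs_of_pos hδ]
            by_contra hcon
            rw [not_le, abs_lt] at hcon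
            apply hn
            rw [hW, Finset.mem_Icc, Nat.ceil_le, Nat.le_floor_iff (Real.exp_pos _).le]
            constructor
            · rw [← Real.le_log_iff_exp_le hnp]; linarith
            · rw [← Real.log_le_iff_le_exp hnp]; linarith
          have hu2 : 0 < (Real.log n - y) ^ 2 := lt_of_lt_of_le (by positivity) hfar
          have hu : Real.log n - y ≠ 0 := by
            intro h; rw [h] at hu2; simp at hu2
          have hk := fejK_le (T * (Real.log n - y)) (mul_ne_zero hT0.ne' hu)
          have hk2 : 4 / (T * (Real.log n - y)) ^ 2 ≤ E / T ^ 2 * (1 / (1 + (Real.log n - y) ^ 2)) := by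
            have e : 1 / (Real.log n - y) ^ 2 ≤ (1 + 1 / δ ^ 2) * (1 / (1 + (Real.log n - y) ^ 2)) := by
              rw [mul_one_div, div_le_div_iff₀ hu2 (by positivity)]
              have : 1 ≤ 1 / δ ^ 2 * (Real.log n - y) ^ 2 := by
                rw [one_div, inv_mul_eq_div, one_le_div (by positivity)]
                exact hfar
              linarith
            calc 4 / (T * (Real.log n - y)) ^ 2 = 4 / T ^ 2 * (1 / (Real.log n - y) ^ 2) := by
                  field_simp
              _ ≤ 4 / T ^ 2 * ((1 + 1 / δ ^ 2) * (1 / (1 + (Real.log n - y) ^ 2))) := by gcongr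
              _ = _ := by rw [hE]; ring
          calc _ ≤ vonMangoldt n / n * (E / T ^ 2 * (1 / (1 + (Real.log n - y) ^ 2))) :=
                mul_le_mul_of_nonneg_left (hk.trans hk2) hv
            _ = _ := by ring
      refine (Finset.sum_le_sum hterm).trans ?_
      rw [Finset.sum_add_distrib, ← Finset.mul_sum]
      refine add_le_add ?_ (mul_le_mul_of_nonneg_left (hsh y s) (by positivity))
      rw [← Finset.sum_filter]
      refine Finset.sum_le_sum_of_subset_of_nonneg ?_ (fun n _ _ => div_nonneg vonMangoldt_nonneg (by positivity))
      intro n hn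
      exact (Finset.mem_filter.mp hn).2
  have hsmall : E / T ^ 2 * B ≤ 1 / (32 * T) := by
    rw [div_mul_eq_mul_div, div_le_div_iff₀ (by positivity) (by positivity)]
    nlinarith
  have e1 : 1 / (8 * T) = 4 * (1 / (32 * T)) := by field_simp; norm_num
  have e2 : 1 / (16 * T) = 2 * (1 / (32 * T)) := by field_simp; norm_num
  rw [e1] at hy2
  rw [e2] at hy1
  linarith


open ArithmeticFunction in
lemma prime_count_lower (η : ℝ) (hη : 0 < η) (hη1 : η < 1) : ∃ c : ℝ, 0 < c ∧ ∀ᶠ X : ℝ in atTop,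
    c * X / Real.log X ≤
      (((Finset.Icc ⌈(1 - η) * X⌉₊ ⌊X⌋₊).filter Nat.Prime).card : ℝ) := by
  set δ : ℝ := -Real.log (1 - η) / 2 with hδ
  have hδ0 : 0 < δ := by
    have := Real.log_neg (show 0 < 1 - η by linarith) (by linarith)
    rw [hδ]; linarith
  obtain ⟨c, hc, hev⟩ := short_lower δ hδ0
  obtain ⟨C, hC⟩ := Chebyshev.psi_sub_theta_le_mul_sqrt
  have hη2 : 0 < 1 - η := by linarith
  refine ⟨c * (1 - η) / 2, by positivity, ?_⟩
  have htop : Tendsto (fun X : ℝ => Real.log X - δ) atTop atTop :=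
    tendsto_atTop_add_const_right _ _ Real.tendsto_log_atTop
  have hsq : Tendsto (fun X : ℝ => Real.sqrt X) atTop atTop := Real.tendsto_sqrt_atTop
  filter_upwards [htop.eventually hev, eventually_gt_atTop 1,
    hsq.eventually_ge_atTop (C / (c * (1 - η) / 2))] with X hX hX1 hXs
  have hX0 : 0 < X := by linarith
  have e1 : Real.exp (Real.log X - δ + δ) = X := by rw [sub_add_cancel, Real.exp_log hX0]
  have e2 : Real.exp (Real.log X - δ - δ) = (1 - η) * X := by
    have : Real.log X - δ - δ = Real.log (1 - η) + Real.log X := by rw [hδ]; ring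
    rw [this, Real.exp_add, Real.exp_log hη2, Real.exp_log hX0]
  rw [e1, e2] at hX
  set W := Finset.Icc ⌈(1 - η) * X⌉₊ ⌊X⌋₊ with hW
  have hlog : 0 < Real.log X := Real.log_pos hX1
  have h1 : c * ((1 - η) * X) ≤ ∑ n ∈ W, vonMangoldt n := by
    calc c * ((1 - η) * X) ≤ (∑ n ∈ W, vonMangoldt n / n) * ((1 - η) * X) := by gcongr
      _ = ∑ n ∈ W, vonMangoldt n / n * ((1 - η) * X) := by rw [Finset.sum_mul]
      _ ≤ ∑ n ∈ W, vonMangoldt n := by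
          refine Finset.sum_le_sum fun n hn => ?_
          rw [hW, Finset.mem_Icc, Nat.ceil_le] at hn
          have hnp : (0:ℝ) < n := lt_of_lt_of_le (by positivity) hn.1
          rw [div_mul_eq_mul_div, div_le_iff₀ hnp]
          exact mul_le_mul_of_nonneg_left hn.1 vonMangoldt_nonneg
  have h2 : ∑ n ∈ W, vonMangoldt n ≤ (W.filter Nat.Prime).card * Real.log X + C * Real.sqrt X := by
    rw [← Finset.sum_filter_add_sum_filter_not W Nat.Prime]
    refine add_le_add ?_ ?_
    · rw [← nsmul_eq_mul]
      refine Finset.sum_le_card_nsmul _ _ _ fun n hn => ?_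
      rw [Finset.mem_filter, hW, Finset.mem_Icc, Nat.le_floor_iff hX0.le] at hn
      rw [vonMangoldt_apply_prime hn.2]
      exact Real.log_le_log (by exact_mod_cast hn.2.pos) hn.1.2
    · refine le_trans ?_ (hC X)
      rw [Chebyshev.psi_sub_theta_eq_sum_not_prime]
      refine Finset.sum_le_sum_of_subset_of_nonneg ?_ (fun n _ _ => vonMangoldt_nonneg)
      refine Finset.filter_subset_filter _ ?_
      intro n hn
      rw [hW, Finset.mem_Icc] at hn
      rw [Finset.mem_Ioc]
      refine ⟨lt_of_lt_of_le (Nat.ceil_pos.mpr (by positivity)) hn.1, hn.2⟩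
  have h3 : C * Real.sqrt X ≤ c * (1 - η) / 2 * X := by
    rw [div_le_iff₀ (by positivity)] at hXs
    have := Real.mul_self_sqrt hX0.le
    have h5 := Real.sqrt_nonneg X
    have h6 := mul_le_mul_of_nonneg_right hXs h5
    calc C * Real.sqrt X ≤ _ := h6
      _ = c * (1 - η) / 2 * (Real.sqrt X * Real.sqrt X) := by ring
      _ = _ := by rw [this]
  rw [div_le_iff₀ hlog]
  linarith

/-- admissible residue classes -/
noncomputable def admS (h : ℤ) (Q : ℕ) : Set (ZMod Q) := {a | IsUnit a ∧ IsUnit (a + (h : ZMod Q))}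

lemma adm_mul (h : ℤ) (m n : ℕ) (hmn : m.Coprime n) :
    (admS h (m * n)).ncard = (admS h m).ncard * (admS h n).ncard := by
  rw [← Set.ncard_prod]
  let e := ZMod.chineseRemainder hmn
  have : admS h m ×ˢ admS h n = e '' (admS h (m * n)) := by
    ext x
    constructor
    · rintro ⟨h1, h2⟩
      refine ⟨e.symm x, ⟨?_, ?_⟩, by simp⟩
      · rw [← MulEquiv.isUnit_map e, RingEquiv.apply_symm_apply, Prod.isUnit_iff]
        exact ⟨h1.1, h2.1⟩
      · rw [← MulEquiv.isUnit_map e, map_add, RingEquiv.apply_symm_apply, Prod.isUnit_iff, map_intCast]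
        exact ⟨h1.2, h2.2⟩
    · rintro ⟨y, ⟨h1, h2⟩, rfl⟩
      rw [← MulEquiv.isUnit_map e, Prod.isUnit_iff] at h1
      rw [← MulEquiv.isUnit_map e, map_add, Prod.isUnit_iff, map_intCast] at h2
      exact ⟨⟨h1.1, h2.1⟩, ⟨h1.2, h2.2⟩⟩
  rw [this, Set.ncard_image_of_injective _ e.injective]

lemma adm_prime (h : ℤ) (p : ℕ) (hp : p.Prime) (hph : ¬ (p : ℤ) ∣ h) :
    (admS h p).ncard = p - 2 := by
  have := Fact.mk hp
  have h0 : (h : ZMod p) ≠ 0 := by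
    rwa [Ne, ZMod.intCast_zmod_eq_zero_iff_dvd]
  have : admS h p = ({0, -(h : ZMod p)} : Set (ZMod p))ᶜ := by
    ext a
    simp only [admS, isUnit_iff_ne_zero, Set.mem_ofPred_eq, Set.mem_compl_iff, Set.mem_insert_iff,
      Set.mem_singleton_iff, not_or, ne_eq]
    rw [add_eq_zero_iff_eq_neg]
  rw [this, Set.ncard_compl, Set.ncard_pair (by simpa [eq_comm] using h0), Nat.card_eq_fintype_card, ZMod.card]

lemma adm_prod (h : ℤ) (s : Finset ℕ) (hs : ∀ p ∈ s, p.Prime ∧ ¬ (p : ℤ) ∣ h) :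
    ((admS h (∏ p ∈ s, p)).ncard : ℝ) ≤ Real.exp (-∑ p ∈ s, 1 / (p:ℝ)) * (∏ p ∈ s, p).totient := by
  induction s using Finset.induction_on with
  | empty =>
    simp only [Finset.prod_empty, Finset.sum_empty, neg_zero, Real.exp_zero, Nat.totient_one]
    have : (admS h 1).ncard ≤ 1 := by
      rw [Set.ncard_le_one_iff]
      intro a b _ _; exact Subsingleton.elim _ _
    simpa using this
  | insert p s hps ih =>
    have ih' := ih fun q hq => hs q (Finset.mem_insert_of_mem hq)
    obtain ⟨hp, hph⟩ := hs p (Finset.mem_insert_self _ _)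
    rw [Finset.prod_insert hps, Finset.sum_insert hps]
    have hcop : p.Coprime (∏ q ∈ s, q) := by
      apply Nat.Coprime.prod_right
      intro q hq
      rw [Nat.coprime_primes hp (hs q (Finset.mem_insert_of_mem hq)).1]
      rintro rfl; exact hps hq
    rw [adm_mul h _ _ hcop, Nat.totient_mul hcop, Nat.totient_prime hp, adm_prime h p hp hph]
    push_cast [hp.two_le, hp.one_le]
    have hp1 : (2:ℝ) ≤ p := by exact_mod_cast hp.two_le
    have hb : (p:ℝ) - 2 ≤ Real.exp (-(1 / (p:ℝ))) * (p - 1) := by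
      have h1 := Real.add_one_le_exp (-(1 / (p:ℝ)))
      have h2 : (-(1 / (p:ℝ)) + 1) * (p - 1) = p - 2 + 1 / p := by field_simp; ring
      have h3 : 0 < 1 / (p:ℝ) := by positivity
      nlinarith
    calc ((p:ℝ) - 2) * (admS h (∏ q ∈ s, q)).ncard
        ≤ (Real.exp (-(1 / (p:ℝ))) * (p - 1)) * (Real.exp (-∑ p ∈ s, 1 / (p:ℝ)) * (∏ p ∈ s, p).totient) := by
          apply mul_le_mul hb ih' (by positivity)
          apply mul_nonneg (Real.exp_pos _).le; linarith
      _ = _ := by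
          rw [neg_add, Real.exp_add]; ring

lemma adm_small (h : ℤ) (hh : h ≠ 0) (ε : ℝ) (hε : 0 < ε) :
    ∃ Q : ℕ, Q ≠ 0 ∧ ((admS h Q).ncard : ℝ) ≤ ε * Q.totient := by
  have hdiv := Nat.Primes.not_summable_one_div
  -- sum over primes larger than |h|
  have hns : ¬ Summable (fun n : ℕ => if n.Prime ∧ h.natAbs < n then 1 / (n:ℝ) else 0) := by
    intro hsum
    apply not_summable_one_div_on_primes
    rw [← summable_nat_add_iff (h.natAbs + 1)] at hsum ⊢
    refine hsum.congr fun n => ?_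
    by_cases hp : (n + (h.natAbs + 1)).Prime
    · rw [if_pos ⟨hp, by omega⟩, Set.indicator_of_mem (by exact hp)]
    · rw [if_neg (fun h => hp h.1), Set.indicator_of_notMem (by exact hp)]
  rw [not_summable_iff_tendsto_nat_atTop_of_nonneg (fun n => by split_ifs <;> positivity)] at hns
  obtain ⟨N, hN⟩ := (hns.eventually_ge_atTop (-Real.log ε)).exists
  set s := (Finset.range N).filter (fun n => n.Prime ∧ h.natAbs < n) with hs
  have hsp : ∀ p ∈ s, p.Prime ∧ ¬ (p : ℤ) ∣ h := by
    intro p hp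
    rw [hs, Finset.mem_filter] at hp
    refine ⟨hp.2.1, fun hd => ?_⟩
    have := Int.natAbs_dvd_natAbs.mpr hd
    simp only [Int.natAbs_natCast] at this
    have := Nat.le_of_dvd (Int.natAbs_pos.mpr hh) this
    omega
  refine ⟨∏ p ∈ s, p, Finset.prod_ne_zero_iff.mpr fun p hp => (hsp p hp).1.ne_zero, ?_⟩
  refine (adm_prod h s hsp).trans ?_
  gcongr
  rw [← Finset.sum_filter] at hN
  rw [← Real.le_log_iff_exp_le hε]
  linarith


/-- primes `p ≤ X` with `|p + h|` prime -/
noncomputable def pairP (h : ℤ) (X : ℝ) : Finset ℕ :=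
  (Finset.Icc 1 ⌊X⌋₊).filter (fun p => p.Prime ∧ ((p : ℤ) + h).natAbs.Prime)

lemma mem_pairP {h : ℤ} {X : ℝ} {p : ℕ} :
    p ∈ pairP h X ↔ (p:ℝ) ≤ X ∧ p.Prime ∧ ((p : ℤ) + h).natAbs.Prime := by
  rw [pairP, Finset.mem_filter, Finset.mem_Icc]
  constructor
  · rintro ⟨⟨h1, h2⟩, h3⟩
    exact ⟨(Nat.le_floor_iff' (by omega)).mp h2, h3⟩
  · rintro ⟨h1, h3⟩
    exact ⟨⟨h3.1.one_le, (Nat.le_floor_iff' h3.1.ne_zero).mpr h1⟩, h3⟩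

lemma unit_of_prime_gt {Q p : ℕ} (hQ : Q ≠ 0) (hp : p.Prime) (h : Q < p) : IsUnit (p : ZMod Q) := by
  rw [ZMod.isUnit_iff_coprime, Nat.coprime_comm]
  exact (Nat.coprime_of_lt_prime hQ h hp).symm

lemma unit_of_natAbs {Q : ℕ} (hQ : Q ≠ 0) (z : ℤ) (hp : z.natAbs.Prime) (h : Q < z.natAbs) :
    IsUnit (z : ZMod Q) := by
  have h1 := unit_of_prime_gt hQ hp h
  rcases Int.natAbs_eq z with h2 | h2
  · rw [h2, Int.cast_natCast]; exact h1
  · rw [h2, Int.cast_neg, Int.cast_natCast]; exact h1.neg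

open ArithmeticFunction ArithmeticFunction.vonMangoldt in
lemma pair_window (h : ℤ) (hh : h ≠ 0) (ε : ℝ) (hε : 0 < ε) : ∀ᶠ X : ℝ in atTop,
    ∑ p ∈ (pairP h X).filter (fun p : ℕ => X / Real.exp 1 < p), Real.log p ≤ ε * X := by
  obtain ⟨B, hB, hBu⟩ := AP_upper
  obtain ⟨Q, hQ, hQs⟩ := adm_small h hh (ε / (2 * B)) (by positivity)
  have : NeZero Q := ⟨hQ⟩
  have hfin : (admS h Q).Finite := Set.toFinite _
  have hev : ∀ᶠ y : ℝ in atTop, ∀ a ∈ hfin.toFinset,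
      ∑' n : ℕ, residueClass a n / n * fejK (1 * (Real.log n - y)) ≤ B * (Q.totient : ℝ)⁻¹ := by
    rw [Filter.eventually_all_finset]
    intro a ha
    exact hBu Q a ((hfin.mem_toFinset.mp ha).1)
  filter_upwards [Real.tendsto_log_atTop.eventually hev, eventually_gt_atTop 0,
    eventually_ge_atTop ((Q + h.natAbs + 1) * Real.exp 1)] with X hX hX0 hXl
  have htot : 0 < (Q.totient : ℝ) := by
    have := Nat.totient_pos.mpr (Nat.pos_of_ne_zero hQ)
    positivity
  set V := (pairP h X).filter (fun p : ℕ => X / Real.exp 1 < p) with hV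
  have hmap : ∀ p ∈ V, (p : ZMod Q) ∈ hfin.toFinset := by
    intro p hp
    rw [hV, Finset.mem_filter, mem_pairP] at hp
    obtain ⟨⟨h1, h2, h3⟩, h4⟩ := hp
    have h5 : (Q + h.natAbs + 1 : ℝ) < p := by
      refine lt_of_le_of_lt ?_ h4
      rw [le_div_iff₀ (Real.exp_pos _)]
      exact hXl
    have h6 : Q + h.natAbs + 1 < p := by exact_mod_cast h5
    rw [hfin.mem_toFinset]
    refine ⟨unit_of_prime_gt hQ h2 (by omega), ?_⟩
    have := unit_of_natAbs hQ _ h3 (by omega)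
    push_cast at this
    exact this
  have hterm : ∀ p ∈ V, Real.log p ≤ 2 * X * (residueClass (p : ZMod Q) p / p * fejK (1 * (Real.log p - Real.log X))) := by
    intro p hp
    rw [hV, Finset.mem_filter, mem_pairP] at hp
    obtain ⟨⟨h1, h2, h3⟩, h4⟩ := hp
    have hpp : (0:ℝ) < p := by exact_mod_cast h2.pos
    have hr : residueClass (p : ZMod Q) p = Real.log p := by
      rw [residueClass, Set.indicator_of_mem (by simp), vonMangoldt_apply_prime h2]
    rw [hr]
    have hk : 1 / 2 ≤ fejK (1 * (Real.log p - Real.log X)) := by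
      apply fejK_ge
      have e1 : Real.log p ≤ Real.log X := Real.log_le_log hpp h1
      have e2 : Real.log X - 1 ≤ Real.log p := by
        have := Real.log_le_log (by positivity) h4.le
        rwa [Real.log_div hX0.ne' (Real.exp_pos _).ne', Real.log_exp] at this
      rw [abs_le]; constructor <;> linarith
    have hl : 0 ≤ Real.log p := Real.log_nonneg (by exact_mod_cast h2.one_le)
    have hk2 : 1 ≤ X / p := by rwa [one_le_div hpp]
    calc Real.log p = Real.log p * 1 * 1 := by ring
      _ ≤ Real.log p * (X / p) * (2 * fejK (1 * (Real.log p - Real.log X))) := by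
          gcongr
          linarith
      _ = _ := by ring
  refine (Finset.sum_le_sum hterm).trans ?_
  rw [← Finset.mul_sum, ← Finset.sum_fiberwise_of_maps_to hmap]
  have hin : ∀ a ∈ hfin.toFinset, ∑ p ∈ V.filter (fun p : ℕ => (p : ZMod Q) = a),
      residueClass (p : ZMod Q) p / p * fejK (1 * (Real.log p - Real.log X)) ≤ B * (Q.totient : ℝ)⁻¹ := by
    intro a ha
    refine le_trans ?_ (hX a ha)
    have hS := ker_summable (residueClass a) (residueClass_nonneg a) _ (by positivity)
      (residue_Icc_bound a) 1 one_pos (Real.log X)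
    refine le_trans (le_of_eq ?_) (hS.sum_le_tsum (V.filter (fun p : ℕ => (p : ZMod Q) = a)) (fun n _ => ?_))
    · refine Finset.sum_congr rfl fun p hp => ?_
      rw [(Finset.mem_filter.mp hp).2]
    · have := fejK_nonneg (1 * (Real.log n - Real.log X))
      have := residueClass_nonneg a n
      positivity
  have h7 := Finset.sum_le_card_nsmul _ _ _ hin
  rw [nsmul_eq_mul, ← Set.ncard_eq_toFinset_card _ hfin] at h7
  calc _ ≤ 2 * X * ((admS h Q).ncard * (B * (Q.totient : ℝ)⁻¹)) := by gcongr
    _ ≤ 2 * X * ((ε / (2 * B) * Q.totient) * (B * (Q.totient : ℝ)⁻¹)) := by gcongr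
    _ = ε * X := by field_simp

lemma pair_logsum (h : ℤ) (hh : h ≠ 0) (ε : ℝ) (hε : 0 < ε) : ∃ D : ℝ, ∀ X : ℝ, 0 ≤ X →
    ∑ p ∈ pairP h X, Real.log p ≤ D + 2 * ε * X := by
  obtain ⟨X0, hX0⟩ := eventually_atTop.mp (pair_window h hh ε hε)
  set X1 := max X0 1 with hX1
  have hX1p : 0 < X1 := lt_of_lt_of_le one_pos (le_max_right _ _)
  have hlognn : ∀ X, ∀ p ∈ pairP h X, 0 ≤ Real.log p := fun X p hp =>
    Real.log_nonneg (by exact_mod_cast (mem_pairP.mp hp).2.1.one_le)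
  refine ⟨∑ p ∈ pairP h X1, Real.log p, ?_⟩
  have key : ∀ n : ℕ, ∀ X : ℝ, 0 ≤ X → X ≤ X1 * 2 ^ n →
      ∑ p ∈ pairP h X, Real.log p ≤ ∑ p ∈ pairP h X1, Real.log p + 2 * ε * X := by
    have small : ∀ X : ℝ, 0 ≤ X → X ≤ X1 →
        ∑ p ∈ pairP h X, Real.log p ≤ ∑ p ∈ pairP h X1, Real.log p + 2 * ε * X := by
      intro X h0 h1
      have : ∑ p ∈ pairP h X, Real.log p ≤ ∑ p ∈ pairP h X1, Real.log p := by
        refine Finset.sum_le_sum_of_subset_of_nonneg ?_ (fun p hp _ => hlognn _ p hp)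
        intro p hp
        rw [mem_pairP] at hp ⊢
        exact ⟨hp.1.trans h1, hp.2⟩
      have : 0 ≤ 2 * ε * X := by positivity
      linarith
    intro n
    induction n with
    | zero => intro X h0 h1; exact small X h0 (by simpa using h1)
    | succ n ih =>
      intro X h0 h1
      rcases le_total X X1 with h2 | h2
      · exact small X h0 h2
      have he : 2 ≤ Real.exp 1 := by linarith [Real.add_one_le_exp (1:ℝ)]
      have hdiv : X / Real.exp 1 ≤ X / 2 := by gcongr
      have h3 := ih (X / Real.exp 1) (by positivity) (by
        rw [pow_succ] at h1
        linarith)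
      have h4 := hX0 X ((le_max_left _ _).trans h2)
      have h5 : ∑ p ∈ (pairP h X).filter (fun p : ℕ => ¬ X / Real.exp 1 < p), Real.log p ≤
          ∑ p ∈ pairP h (X / Real.exp 1), Real.log p := by
        refine Finset.sum_le_sum_of_subset_of_nonneg ?_ (fun p hp _ => hlognn _ p hp)
        intro p hp
        rw [Finset.mem_filter, mem_pairP] at hp
        rw [mem_pairP]
        exact ⟨not_lt.mp hp.2, hp.1.2⟩
      rw [← Finset.sum_filter_add_sum_filter_not (pairP h X) (fun p : ℕ => X / Real.exp 1 < p)]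
      have h6 : 2 * ε * (X / Real.exp 1) ≤ 2 * ε * (X / 2) := by gcongr
      linarith
  intro X hX
  obtain ⟨n, hn⟩ := pow_unbounded_of_one_lt (X / X1) (one_lt_two)
  refine key n X hX ?_
  rw [div_lt_iff₀ hX1p] at hn
  linarith

lemma pair_count (h : ℤ) (hh : h ≠ 0) (ε : ℝ) (hε : 0 < ε) : ∀ᶠ X : ℝ in atTop,
    ((pairP h X).card : ℝ) ≤ ε * (X / Real.log X) := by
  obtain ⟨D, hD⟩ := pair_logsum h hh (ε / 16) (by positivity)
  have hlo := (isLittleO_log_rpow_atTop (show (0:ℝ) < 1/2 by norm_num)).bound (show 0 < ε / 4 by positivity)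
  filter_upwards [hlo, eventually_gt_atTop 1, eventually_ge_atTop (D / (ε / 8))] with X h1 hX1 hXD
  have hX0 : 0 < X := by linarith
  have hlog : 0 < Real.log X := Real.log_pos hX1
  have hs0 := Real.sqrt_nonneg X
  rw [← Real.sqrt_eq_rpow, Real.norm_of_nonneg hlog.le, Real.norm_of_nonneg hs0] at h1
  rw [div_le_iff₀ (by positivity)] at hXD
  have hsm := Real.mul_self_sqrt hX0.le
  have hsplit : ((pairP h X).card : ℝ) ≤ Real.sqrt X + (∑ p ∈ pairP h X, Real.log p) / (Real.log X / 2) := by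
    rw [← Finset.card_filter_add_card_filter_not (s := pairP h X) (fun p : ℕ => (p:ℝ) ≤ Real.sqrt X)]
    push_cast
    refine add_le_add ?_ ?_
    · have : (pairP h X).filter (fun p : ℕ => (p:ℝ) ≤ Real.sqrt X) ⊆ Finset.Icc 1 ⌊Real.sqrt X⌋₊ := by
        intro p hp
        rw [Finset.mem_filter, mem_pairP] at hp
        rw [Finset.mem_Icc]
        exact ⟨hp.1.2.1.one_le, Nat.le_floor hp.2⟩
      have h2 := Finset.card_le_card this
      rw [Nat.card_Icc, Nat.add_sub_cancel] at h2
      calc _ ≤ ((⌊Real.sqrt X⌋₊ : ℕ) : ℝ) := by exact_mod_cast h2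
        _ ≤ _ := Nat.floor_le hs0
    · rw [le_div_iff₀ (by positivity), ← nsmul_eq_mul]
      refine (Finset.card_nsmul_le_sum _ (fun p : ℕ => Real.log p) _ (fun p hp => ?_)).trans ?_
      · rw [Finset.mem_filter, not_le] at hp
        rw [← Real.log_sqrt hX0.le]
        exact Real.log_le_log (Real.sqrt_pos.mpr hX0) hp.2.le
      · refine Finset.sum_le_sum_of_subset_of_nonneg (Finset.filter_subset _ _) (fun p hp _ => ?_)
        exact Real.log_nonneg (by exact_mod_cast (mem_pairP.mp hp).2.1.one_le)
  have h3 := hD X hX0.le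
  have h4 : Real.sqrt X ≤ ε / 4 * (X / Real.log X) := by
    rw [← mul_div_assoc, le_div_iff₀ hlog]
    nlinarith
  have h5 : (∑ p ∈ pairP h X, Real.log p) / (Real.log X / 2) ≤ (ε / 4 * X) / (Real.log X / 2) := by
    gcongr
    linarith
  have h6 : (ε / 4 * X) / (Real.log X / 2) = ε / 2 * (X / Real.log X) := by
    field_simp; norm_num
  have h7 : 0 ≤ ε * (X / Real.log X) := by positivity
  linarith


noncomputable def ZZ (a b : ℝ) : Finset ℤ :=
  (Finset.Icc ⌈a⌉ ⌊b⌋).filter (fun m => m.natAbs.Prime)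

lemma mem_ZZ {a b : ℝ} {m : ℤ} : m ∈ ZZ a b ↔ (a ≤ m ∧ (m : ℝ) ≤ b) ∧ m.natAbs.Prime := by
  simp [ZZ, Int.ceil_le, Int.le_floor]

lemma primesR_inter (a b : ℝ) :
    PrimesR ∩ Set.Icc a b = (((ZZ a b).map ⟨fun m : ℤ => (m : ℝ), Int.cast_injective⟩ : Finset ℝ) : Set ℝ) := by
  ext x
  simp only [PrimesR, Set.mem_inter_iff, Set.mem_ofPred_eq, Set.mem_Icc, Finset.coe_map,
    Function.Embedding.coeFn_mk, Set.mem_image, Finset.mem_coe, mem_ZZ]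
  constructor
  · rintro ⟨⟨p, hp, rfl | rfl⟩, h⟩
    · exact ⟨(p : ℤ), by simpa using ⟨h, hp⟩, by simp⟩
    · exact ⟨-(p : ℤ), by simpa using ⟨h, hp⟩, by simp⟩
  · rintro ⟨m, ⟨h, hp⟩, rfl⟩
    refine ⟨⟨m.natAbs, hp, ?_⟩, h⟩
    rcases Int.natAbs_eq m with h1 | h1
    · left
      conv_lhs => rw [h1]
      rw [Int.cast_natCast]
    · right
      conv_lhs => rw [h1]
      rw [Int.cast_neg, Int.cast_natCast]

lemma autoCorr_eq (a b : ℝ) (f : ℝ → ℂ) :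
    autoCorr (PrimesR ∩ Set.Icc a b) f =
      ((ZZ a b).card : ℂ)⁻¹ * ∑ m ∈ ZZ a b, ∑ k ∈ ZZ a b, f ((m : ℝ) - k) := by
  rw [primesR_inter, autoCorr, Set.ncard_coe_finset, Finset.card_map]
  congr 1
  rw [finsum_mem_coe_finset, Finset.sum_map]
  refine Finset.sum_congr rfl fun m _ => ?_
  rw [finsum_mem_coe_finset, Finset.sum_map]
  rfl

lemma offdiag_bound (a b : ℝ) (f : ℝ → ℂ) (M : ℝ) (R : ℕ) (hM0 : 0 ≤ M) (hM : ∀ x, ‖f x‖ ≤ M)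
    (hR : ∀ x, (R : ℝ) < |x| → f x = 0) :
    ‖∑ m ∈ ZZ a b, ∑ k ∈ ZZ a b, f ((m : ℝ) - k) - ((ZZ a b).card : ℂ) * f 0‖ ≤
      M * ∑ h ∈ (Finset.Icc (-(R : ℤ)) R).erase 0,
        (((ZZ a b).filter (fun m => m + h ∈ ZZ a b)).card : ℝ) := by
  set Z := ZZ a b
  have e1 : ∑ m ∈ Z, ∑ k ∈ Z, f ((m : ℝ) - k) - (Z.card : ℂ) * f 0 =
      ∑ m ∈ Z, ∑ k ∈ Z.erase m, f ((m : ℝ) - k) := by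
    have : ∀ m ∈ Z, ∑ k ∈ Z, f ((m : ℝ) - k) = f 0 + ∑ k ∈ Z.erase m, f ((m : ℝ) - k) := by
      intro m hm
      rw [← Finset.add_sum_erase _ _ hm]
      simp
    rw [Finset.sum_congr rfl this, Finset.sum_add_distrib]
    simp
  rw [e1]
  have e2 : ∀ m ∈ Z, ∀ k ∈ Z.erase m, ‖f ((m : ℝ) - k)‖ ≤
      ∑ h ∈ (Finset.Icc (-(R : ℤ)) R).erase 0, if k = m + h then M else 0 := by
    intro m hm k hk
    have hne : k ≠ m := (Finset.mem_erase.mp hk).1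
    by_cases hc : (R : ℝ) < |(m : ℝ) - k|
    · rw [hR _ hc, norm_zero]
      exact Finset.sum_nonneg fun h _ => by split_ifs <;> simp [hM0]
    · have hc2 : |m - k| ≤ (R : ℤ) := by
        have : |(m : ℝ) - k| ≤ R := not_lt.mp hc
        exact_mod_cast this
      rw [abs_le] at hc2
      have hmem : k - m ∈ (Finset.Icc (-(R : ℤ)) R).erase 0 := by
        simp only [Finset.mem_erase, Finset.mem_Icc]
        omega
      refine le_trans ?_ (Finset.single_le_sum (f := fun h => if k = m + h then M else 0)
        (fun h _ => by split_ifs <;> simp [hM0]) hmem)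
      simp [hM]
  calc _ ≤ ∑ m ∈ Z, ∑ k ∈ Z.erase m, ‖f ((m : ℝ) - k)‖ :=
        (norm_sum_le _ _).trans (Finset.sum_le_sum fun m _ => norm_sum_le _ _)
    _ ≤ ∑ m ∈ Z, ∑ k ∈ Z.erase m,
          ∑ h ∈ (Finset.Icc (-(R : ℤ)) R).erase 0, (if k = m + h then M else 0) :=
        Finset.sum_le_sum fun m hm => Finset.sum_le_sum fun k hk => e2 m hm k hk
    _ ≤ ∑ m ∈ Z, ∑ k ∈ Z,
          ∑ h ∈ (Finset.Icc (-(R : ℤ)) R).erase 0, (if k = m + h then M else 0) := by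
        refine Finset.sum_le_sum fun m hm => ?_
        refine Finset.sum_le_sum_of_subset_of_nonneg (Finset.erase_subset _ _) fun k _ _ => ?_
        exact Finset.sum_nonneg fun h _ => by split_ifs <;> simp [hM0]
    _ = ∑ h ∈ (Finset.Icc (-(R : ℤ)) R).erase 0, ∑ m ∈ Z, ∑ k ∈ Z, (if k = m + h then M else 0) := by
        rw [Finset.sum_comm]
        rw [Finset.sum_congr rfl fun k _ => Finset.sum_comm]
        rw [Finset.sum_comm]
        refine Finset.sum_congr rfl fun h _ => Finset.sum_comm
    _ = _ := by
        rw [Finset.mul_sum]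
        refine Finset.sum_congr rfl fun h _ => ?_
        simp only [Finset.sum_ite_eq']
        rw [← Finset.sum_filter, Finset.sum_const, nsmul_eq_mul, mul_comm]

lemma shift_card (a b X : ℝ) (ha : |a| ≤ X) (hb : |b| ≤ X) (h : ℤ) :
    ((ZZ a b).filter (fun m => m + h ∈ ZZ a b)).card ≤ (pairP h X).card + (pairP (-h) X).card := by
  have hsub : (ZZ a b).filter (fun m => m + h ∈ ZZ a b) ⊆
      (pairP h X).image (fun p : ℕ => (p : ℤ)) ∪ (pairP (-h) X).image (fun p : ℕ => -(p : ℤ)) := by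
    intro m hm
    simp only [Finset.mem_filter, mem_ZZ] at hm
    obtain ⟨⟨⟨h1, h2⟩, h3⟩, -, h4⟩ := hm
    rw [abs_le] at ha hb
    simp only [Finset.mem_union, Finset.mem_image, mem_pairP]
    rcases Int.natAbs_eq m with h5 | h5
    · left
      refine ⟨m.natAbs, ⟨?_, h3, ?_⟩, h5.symm⟩
      · have : (m : ℝ) = ((m.natAbs : ℕ) : ℝ) := by
          conv_lhs => rw [h5]
          rw [Int.cast_natCast]
        linarith
      · rw [← h5]; exact h4
    · right
      refine ⟨m.natAbs, ⟨?_, h3, ?_⟩, h5.symm⟩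
      · have : (m : ℝ) = -((m.natAbs : ℕ) : ℝ) := by
          conv_lhs => rw [h5]
          rw [Int.cast_neg, Int.cast_natCast]
        linarith
      · have : ((m.natAbs : ℕ) : ℤ) + -h = -(m + h) := by omega
        rw [this, Int.natAbs_neg]; exact h4
  refine (Finset.card_le_card hsub).trans ((Finset.card_union_le _ _).trans ?_)
  exact add_le_add Finset.card_image_le Finset.card_image_le

lemma ZZ_lower (d : ℝ) (hd : 0 < d) : ∃ c, 0 < c ∧ ∀ᶠ L : ℝ in atTop, ∀ a b : ℝ,
    b - a = L → |a| < d * L → c * (L / Real.log L) ≤ ((ZZ a b).card : ℝ) := by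
  set η : ℝ := 1 / (4 * (d + 1)) with hη
  have hη0 : 0 < η := by positivity
  have hη1 : η < 1 := by
    rw [hη, div_lt_one (by positivity)]; linarith
  have hηd : η * (d + 1) = 1 / 4 := by rw [hη]; field_simp
  obtain ⟨c, hc, hev⟩ := prime_count_lower η hη0 hη1
  obtain ⟨X0, hX0⟩ := eventually_atTop.mp hev
  refine ⟨c / 4, by positivity, ?_⟩
  filter_upwards [eventually_ge_atTop (2 * X0), eventually_ge_atTop (d + 1),
    eventually_ge_atTop 4] with L hL1 hL2 hL3 a b hab hda
  have key : ∀ X : ℝ, L / 2 ≤ X → X ≤ (d + 1) * L →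
      c / 4 * (L / Real.log L) ≤ (((Finset.Icc ⌈(1 - η) * X⌉₊ ⌊X⌋₊).filter Nat.Prime).card : ℝ) := by
    intro X h1 h2
    refine le_trans ?_ (hX0 X (by linarith))
    have hlL : 0 < Real.log L := Real.log_pos (by linarith)
    have hlX : 0 < Real.log X := Real.log_pos (by linarith)
    have hlX2 : Real.log X ≤ 2 * Real.log L := by
      calc Real.log X ≤ Real.log (L * L) := Real.log_le_log (by linarith) (by nlinarith)
        _ = 2 * Real.log L := by rw [Real.log_mul (by linarith) (by linarith)]; ring
    rw [← mul_div_assoc, div_le_div_iff₀ hlL hlX]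
    calc c / 4 * L * Real.log X ≤ c / 4 * L * (2 * Real.log L) := by gcongr
      _ = c * (L / 2) * Real.log L := by ring
      _ ≤ c * X * Real.log L := by gcongr
  rw [abs_lt] at hda
  by_cases hb : L / 2 ≤ b
  · refine (key b hb (by linarith)).trans ?_
    have : η * b ≤ L / 4 := by
      calc η * b ≤ η * ((d + 1) * L) := by gcongr; linarith
        _ = L / 4 := by rw [← mul_assoc, hηd]; ring
    have hle : ((Finset.Icc ⌈(1 - η) * b⌉₊ ⌊b⌋₊).filter Nat.Prime).card ≤ (ZZ a b).card := by
      refine Finset.card_le_card_of_injOn (fun p : ℕ => (p : ℤ)) ?_ ?_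
      · intro p hp
        simp only [Finset.coe_filter, Finset.mem_Icc, Set.mem_ofPred_eq, Nat.ceil_le,
          Nat.le_floor_iff (show 0 ≤ b by linarith)] at hp
        obtain ⟨⟨h1, h2⟩, h3⟩ := hp
        simp only [Finset.mem_coe, mem_ZZ, Int.natAbs_natCast, Int.cast_natCast]
        exact ⟨⟨by linarith, h2⟩, h3⟩
      · intro p _ q _ h
        simpa using h
    exact_mod_cast hle
  · push Not at hb
    refine (key (-a) (by linarith) (by linarith)).trans ?_
    have : η * (-a) ≤ L / 4 := by
      calc η * (-a) ≤ η * ((d + 1) * L) := by gcongr; linarith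
        _ = L / 4 := by rw [← mul_assoc, hηd]; ring
    have hle : ((Finset.Icc ⌈(1 - η) * (-a)⌉₊ ⌊-a⌋₊).filter Nat.Prime).card ≤ (ZZ a b).card := by
      refine Finset.card_le_card_of_injOn (fun p : ℕ => -(p : ℤ)) ?_ ?_
      · intro p hp
        simp only [Finset.coe_filter, Finset.mem_Icc, Set.mem_ofPred_eq, Nat.ceil_le,
          Nat.le_floor_iff (show 0 ≤ -a by linarith)] at hp
        obtain ⟨⟨h1, h2⟩, h3⟩ := hp
        simp only [Finset.mem_coe, mem_ZZ, Int.natAbs_neg, Int.natAbs_natCast, Int.cast_natCast,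
          Int.cast_neg]
        exact ⟨⟨by linarith, by linarith⟩, h3⟩
      · intro p _ q _ h
        simpa using h
    exact_mod_cast hle

theorem primes_counting_autocorrelation_general_intervals
    (a b : ℕ → ℝ)
    (hw : Tendsto (fun n => b n - a n) atTop atTop)
    (hd : ∃ d : ℝ, 0 < d ∧ ∀ n, |a n| < d * (b n - a n)) :
    ∀ f : ℝ → ℂ, Continuous f → HasCompactSupport f →
      Tendsto (fun n => autoCorr (PrimesR ∩ Set.Icc (a n) (b n)) f) atTop (nhds (f 0)) := by
  intro f hf hfc
  obtain ⟨d, hd0, hd⟩ := hd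
  obtain ⟨M, hM⟩ := hfc.exists_bound_of_continuous hf
  have hM0 : 0 ≤ M := (norm_nonneg _).trans (hM 0)
  obtain ⟨R, hR⟩ : ∃ R : ℕ, ∀ x, (R : ℝ) < |x| → f x = 0 := by
    obtain ⟨r, hr⟩ := hfc.isCompact.isBounded.subset_closedBall (0 : ℝ)
    obtain ⟨R, hR⟩ := exists_nat_ge r
    refine ⟨R, fun x hx => ?_⟩
    by_contra hne
    have := hr (subset_tsupport f hne)
    rw [mem_closedBall_zero_iff, Real.norm_eq_abs] at this
    linarith
  obtain ⟨c, hc, hlow⟩ := ZZ_lower d hd0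
  set H := (Finset.Icc (-(R : ℤ)) R).erase 0 with hH
  rw [Metric.tendsto_atTop']
  intro δ hδ
  set K : ℝ := M * (H.card * (2 * (d + 1))) / c with hK
  have hK0 : 0 ≤ K := by positivity
  set ε : ℝ := δ / (2 * (K + 1)) with hε
  have hε0 : 0 < ε := by positivity
  have hpair : ∀ᶠ X : ℝ in atTop, ∀ h ∈ H, ((pairP h X).card : ℝ) ≤ ε * (X / Real.log X) ∧
      ((pairP (-h) X).card : ℝ) ≤ ε * (X / Real.log X) := by
    rw [Filter.eventually_all_finset]
    intro h hh
    have h0 : h ≠ 0 := (Finset.mem_erase.mp hh).1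
    exact (pair_count h h0 ε hε0).and (pair_count (-h) (neg_ne_zero.mpr h0) ε hε0)
  have hX : Tendsto (fun n => (d + 1) * (b n - a n)) atTop atTop :=
    hw.const_mul_atTop (by linarith)
  obtain ⟨N, hN⟩ := eventually_atTop.mp ((hX.eventually hpair).and ((hw.eventually hlow).and
    (hw.eventually (eventually_ge_atTop 4))))
  refine ⟨N, fun n hn => ?_⟩
  obtain ⟨h1, h2, h3⟩ := hN n hn.le
  have h2 := h2 (a n) (b n) rfl (hd n)
  have hdn := hd n
  set L := b n - a n with hL
  have hlL : 0 < Real.log L := Real.log_pos (by linarith)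
  set Q := L / Real.log L with hQ
  have hQ0 : 0 < Q := by positivity
  have hXQ : (d + 1) * L / Real.log ((d + 1) * L) ≤ (d + 1) * Q := by
    rw [hQ, ← mul_div_assoc]
    have : Real.log L ≤ Real.log ((d + 1) * L) := Real.log_le_log (by linarith) (by nlinarith)
    gcongr
  have hcard : 0 < ((ZZ (a n) (b n)).card : ℝ) := lt_of_lt_of_le (by positivity) h2
  have hcne : ((ZZ (a n) (b n)).card : ℂ) ≠ 0 := by
    exact_mod_cast hcard.ne'
  have hoff := offdiag_bound (a n) (b n) f M R hM0 hM hR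
  have haX : |a n| ≤ (d + 1) * L := by linarith
  have hbX : |b n| ≤ (d + 1) * L := by
    rw [abs_lt] at hdn
    rw [abs_le]; constructor <;> nlinarith
  have hsum : ∑ h ∈ H, (((ZZ (a n) (b n)).filter (fun m => m + h ∈ ZZ (a n) (b n))).card : ℝ) ≤
      H.card * (2 * (d + 1)) * (ε * Q) := by
    calc _ ≤ ∑ h ∈ H, (2 * (ε * ((d + 1) * Q))) := by
          refine Finset.sum_le_sum fun h hh => ?_
          have s1 : (((ZZ (a n) (b n)).filter (fun m => m + h ∈ ZZ (a n) (b n))).card : ℝ) ≤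
              (pairP h ((d + 1) * L)).card + (pairP (-h) ((d + 1) * L)).card := by
            exact_mod_cast shift_card (a n) (b n) ((d + 1) * L) haX hbX h
          obtain ⟨s2, s3⟩ := h1 h hh
          have s4 := mul_le_mul_of_nonneg_left hXQ hε0.le
          linarith
      _ = _ := by rw [Finset.sum_const, nsmul_eq_mul]; ring
  rw [dist_eq_norm, autoCorr_eq]
  have e : ((ZZ (a n) (b n)).card : ℂ)⁻¹ * ∑ m ∈ ZZ (a n) (b n), ∑ k ∈ ZZ (a n) (b n),
      f ((m : ℝ) - k) - f 0 = ((ZZ (a n) (b n)).card : ℂ)⁻¹ *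
      (∑ m ∈ ZZ (a n) (b n), ∑ k ∈ ZZ (a n) (b n), f ((m : ℝ) - k) -
        ((ZZ (a n) (b n)).card : ℂ) * f 0) := by
    rw [mul_sub, inv_mul_cancel_left₀ hcne]
  rw [e, norm_mul, norm_inv, Complex.norm_natCast, inv_mul_lt_iff₀ hcard]
  calc _ ≤ M * (H.card * (2 * (d + 1)) * (ε * Q)) := hoff.trans (by gcongr)
    _ = K * ε * (c * Q) := by rw [hK]; field_simp
    _ < δ * (c * Q) := by
        have : K * ε < δ := by
          rw [hε, ← mul_div_assoc, div_lt_iff₀ (by positivity)]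
          nlinarith
        gcongr
    _ ≤ _ := by rw [mul_comm δ]; gcongr
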